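/- Adaptive union bound (combinatorial core of Proposition 1): let d : ℕ, and for every list h of naturals with |h| < d let k(h) be a positive natural, δ(h) a nonnegative real, and Bad(h) ⊆ Fin (k h) a set with card (Bad h) ≤ δ(h)·k(h). Assume that along every full history (r_1,…,r_d) with r_{i+1} ∈ Fin (k (r_1,…,r_i)) the sum δ(∅) + δ(r_1) + … + δ(r_1,…,r_{d-1}) is at most ε. If each r_{i+1} is chosen uniformly at random from Fin (k (r_1,…,r_i)), independently given the past, then the probability that r_{i+1} ∈ Bad(r_1,…,r_i) for some i < d is at most ε. -/

import Mathlib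

/-! Regard `ε` as an initial capital from which `δ h` is paid at each visited history `h`. From a
valid history `h`, the probability of a later bad choice is at most the capital still unspent. By
backward induction, the next choice is bad with probability at most `δ h`, and after any choice the
probability of a later bad one is at most the unspent capital minus `δ h`. This last quantity bounds
a probability, so it is nonnegative and the bound survives when it is charged to the bad choices as
well as to the good ones. -/

/-- A full history of the random process is valid if each entry was chosen among the
`k`-many options available given the preceding entries. -/
def ValidHistory (k : List ℕ → ℕ) (h : List ℕ) : Prop :=
  ∀ i < h.length, h.getD i 0 < k (h.take i)

/-- `hitProb k Bad d h`: the probability that, continuing from history `h` for `d`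
more uniformly random steps (the next entry being uniform on `Fin (k h')` at each
intermediate history `h'`), some step lands in the bad set of its history. -/
noncomputable def hitProb (k : List ℕ → ℕ) (Bad : (h : List ℕ) → Finset (Fin (k h))) :
    ℕ → List ℕ → ℝ
  | 0, _ => 0
  | d + 1, h =>
      (∑ r : Fin (k h), if r ∈ Bad h then 1 else hitProb k Bad d (h ++ [(r : ℕ)])) / (k h)

/-- The sum of `f` over the proper prefixes of `l`, the empty one included. For `f = δ` it is the
capital spent on the way to the history `l`: the term `δ l` is paid only by the choice made at
`l`. -/
def properPrefixSum {α M : Type*} [AddCommMonoid M] (f : List α → M) (l : List α) : M :=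
  ∑ i ∈ Finset.range l.length, f (l.take i)

@[simp]
lemma properPrefixSum_nil {α M : Type*} [AddCommMonoid M] (f : List α → M) :
    properPrefixSum f [] = 0 :=
  Finset.sum_range_zero _

lemma properPrefixSum_append_singleton {α M : Type*} [AddCommMonoid M] (f : List α → M)
    (l : List α) (a : α) :
    properPrefixSum f (l ++ [a]) = properPrefixSum f l + f l := by
  rw [properPrefixSum, List.length_append, List.length_singleton, Finset.sum_range_succ,
    List.take_left]
  congr 1
  refine Finset.sum_congr rfl fun i hi => ?_
  rw [List.take_append_of_le_length (Finset.mem_range.mp hi).le]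

lemma validHistory_nil (k : List ℕ → ℕ) : ValidHistory k [] :=
  fun i hi => absurd hi i.not_lt_zero

lemma ValidHistory.append_singleton {k : List ℕ → ℕ} {h : List ℕ} {r : ℕ}
    (hv : ValidHistory k h) (hr : r < k h) : ValidHistory k (h ++ [r]) := by
  intro i hi
  rw [List.length_append, List.length_singleton] at hi
  rcases Nat.lt_succ_iff_lt_or_eq.mp hi with hlt | rfl
  · rw [List.getD_append _ _ _ _ hlt, List.take_append_of_le_length hlt.le]
    exact hv i hlt
  · simpa using hr

section HitProb

variable {k : List ℕ → ℕ} {Bad : (h : List ℕ) → Finset (Fin (k h))}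

lemma hitProb_nonneg (n : ℕ) (h : List ℕ) : 0 ≤ hitProb k Bad n h := by
  induction n generalizing h with
  | zero => exact le_rfl
  | succ n ih =>
    refine div_nonneg (Finset.sum_nonneg fun r _ => ?_) (Nat.cast_nonneg _)
    split_ifs
    exacts [zero_le_one, ih _]

lemma hitProb_succ_le_card_div_add {n : ℕ} {h : List ℕ} {c : ℝ} (hk : 0 < k h)
    (hc : ∀ r : Fin (k h), hitProb k Bad n (h ++ [(r : ℕ)]) ≤ c) :
    hitProb k Bad (n + 1) h ≤ (Bad h).card / k h + c := by
  have hk' : (0 : ℝ) < k h := Nat.cast_pos.mpr hk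
  have hc_nonneg : 0 ≤ c := (hitProb_nonneg _ _).trans (hc ⟨0, hk⟩)
  rw [hitProb, div_le_iff₀ hk']
  calc ∑ r : Fin (k h), (if r ∈ Bad h then 1 else hitProb k Bad n (h ++ [(r : ℕ)]))
      ≤ ∑ r : Fin (k h), ((if r ∈ Bad h then 1 else 0) + c) := by
        refine Finset.sum_le_sum fun r _ => ?_
        split_ifs
        · exact le_add_of_nonneg_right hc_nonneg
        · simpa only [zero_add] using hc r
    _ = (Bad h).card + k h * c := by simp [Finset.sum_add_distrib]
    _ = ((Bad h).card / k h + c) * k h := by field_simp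

theorem adaptive_union_bound_general {d n : ℕ} {δ : List ℕ → ℝ} {ε : ℝ}
    (hk : ∀ h : List ℕ, h.length < d → ValidHistory k h → 0 < k h)
    (hBad : ∀ h : List ℕ, h.length < d → ValidHistory k h → ((Bad h).card : ℝ) ≤ δ h * k h)
    (hsum : ∀ h : List ℕ, h.length = d → ValidHistory k h → properPrefixSum δ h ≤ ε)
    {h : List ℕ} (hd : h.length + n = d) (hv : ValidHistory k h) :
    hitProb k Bad n h ≤ ε - properPrefixSum δ h := by
  induction n generalizing h with
  | zero => exact sub_nonneg.mpr (hsum h hd hv)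
  | succ n ih =>
    have hlt : h.length < d := by lia
    have hkh : 0 < k h := hk h hlt hv
    have hbad : (Bad h).card / k h ≤ δ h :=
      (div_le_iff₀ (Nat.cast_pos.mpr hkh)).mpr (hBad h hlt hv)
    have hnext (r : Fin (k h)) :
        hitProb k Bad n (h ++ [(r : ℕ)]) ≤ ε - (properPrefixSum δ h + δ h) := by
      rw [← properPrefixSum_append_singleton δ h r]
      exact ih (by rw [List.length_append, List.length_singleton]; lia)
        (hv.append_singleton r.isLt)
    calc hitProb k Bad (n + 1) h
        ≤ (Bad h).card / k h + (ε - (properPrefixSum δ h + δ h)) :=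
          hitProb_succ_le_card_div_add hkh hnext
      _ ≤ δ h + (ε - (properPrefixSum δ h + δ h)) := by gcongr
      _ = ε - properPrefixSum δ h := by ring

end HitProb

/-- adaptive union bound: if at every history `h` of length `< d` the
bad set has at most a `δ h` fraction of the `k h` options, and along every valid full
history the thresholds `δ` sum to at most `ε`, then the probability that the process
ever makes a bad choice is at most `ε`. -/
theorem adaptive_union_bound (d : ℕ) (k : List ℕ → ℕ) (δ : List ℕ → ℝ) (ε : ℝ)
    (Bad : (h : List ℕ) → Finset (Fin (k h)))
    (hk : ∀ h : List ℕ, h.length < d → 0 < k h)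
    (hδ : ∀ h : List ℕ, h.length < d → 0 ≤ δ h)
    (hBad : ∀ h : List ℕ, h.length < d → ((Bad h).card : ℝ) ≤ δ h * k h)
    (hsum : ∀ h : List ℕ, h.length = d → ValidHistory k h →
      ∑ i ∈ Finset.range d, δ (h.take i) ≤ ε) :
    hitProb k Bad d [] ≤ ε := by
  have hspent (h : List ℕ) (hd : h.length = d) (hv : ValidHistory k h) :
      properPrefixSum δ h ≤ ε := by
    simpa only [properPrefixSum, hd] using hsum h hd hv
  simpa using adaptive_union_bound_general (fun h hd _ => hk h hd) (fun h hd _ => hBad h hd)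
    hspent (zero_add d) (validHistory_nil k)
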